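/- (Proposition 4.1.) Suppose some sequence q on the network N is aperiodic and fragmentarily asymptotically stable. Then the sequences Σ^k q, k ∈ ℕ, are pairwise distinct, each of them is aperiodic, and each of them is fragmentarily asymptotically stable; in particular, there exist infinitely many distinct aperiodic f.a.s. sequences on N. -/

import Mathlib

open MeasureTheory Filter Topology Metric Set

noncomputable section

/-- The shift operator `Σ` on sequences: `(Σ q) k = q (k+1)`. -/
def shiftSeq {A : Type*} (q : ℕ → A) : ℕ → A := fun k => q (k + 1)

/-- A sequence is preperiodic if there exist `K ≥ 1` and `K₀ ≥ 0` with
`q (k + K) = q k` for all `k > K₀`. -/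
def PreperiodicSeq {A : Type*} (q : ℕ → A) : Prop :=
  ∃ K : ℕ, 1 ≤ K ∧ ∃ K₀ : ℕ, ∀ k > K₀, q (k + K) = q k

/-- Euclidean space `ℝ^d`. -/
abbrev Es (d : ℕ) := EuclideanSpace ℝ (Fin d)

/-- The heteroclinic network as a subset of phase space:
`N = (⋃ p, {ξ p}) ∪ (⋃ j, γ j)`. -/
def netSet {d P Q : ℕ} (ξ : Fin P → Es d) (γ : Fin Q → Set (Es d)) : Set (Es d) :=
  (⋃ p, {ξ p}) ∪ ⋃ j, γ j

/-- `x` follows the sequence `q` within `UN`: there are times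
`0 ≤ t 0 < t' 0 < t 1 < t' 1 < ⋯` such that the trajectory of `x` stays in `UN`
after time `t 0`, visits the neighborhoods `U (a (q k))` and `V (q k)` at times
`t k` and `t' k`, and between `t' k` and `t' (k+1)` avoids all neighborhoods
`U p` with `p ≠ b (q k)`. -/
def FollowsSeq {d P Q : ℕ} (φ : ℝ → Es d → Es d)
    (U : Fin P → Set (Es d)) (V : Fin Q → Set (Es d))
    (a b : Fin Q → Fin P) (UN : Set (Es d)) (q : ℕ → Fin Q) (x : Es d) : Prop :=
  ∃ t t' : ℕ → ℝ,
    0 ≤ t 0 ∧ (∀ k, t k < t' k) ∧ (∀ k, t' k < t (k + 1)) ∧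
    (∀ s, t 0 < s → φ s x ∈ UN) ∧
    (∀ k, φ (t k) x ∈ U (a (q k))) ∧
    (∀ k, φ (t' k) x ∈ V (q k)) ∧
    (∀ k, ∀ s, t' k < s → s < t' (k + 1) → ∀ p, p ≠ b (q k) → φ s x ∉ U p)

/-- The `δ`-stable set `S_δ(q)` of a sequence `q`. -/
def stableSet {d P Q : ℕ} (φ : ℝ → Es d → Es d) (ξ : Fin P → Es d) (γ : Fin Q → Set (Es d))
    (U : Fin P → Set (Es d)) (V : Fin Q → Set (Es d)) (a b : Fin Q → Fin P)
    (δ : ℝ) (q : ℕ → Fin Q) : Set (Es d) :=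
  {x ∈ thickening δ (netSet ξ γ) |
    FollowsSeq φ U V a b (thickening δ (netSet ξ γ)) q x}

/-- The set `A_δ(q)` of points attracted to `N` along `q`. -/
def attrSet {d P Q : ℕ} (φ : ℝ → Es d → Es d) (ξ : Fin P → Es d) (γ : Fin Q → Set (Es d))
    (U : Fin P → Set (Es d)) (V : Fin Q → Set (Es d)) (a b : Fin Q → Fin P)
    (δ : ℝ) (q : ℕ → Fin Q) : Set (Es d) :=
  {x ∈ stableSet φ ξ γ U V a b δ q |
    Tendsto (fun t => infDist (φ t x) (netSet ξ γ)) atTop (𝓝 0)}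

/-- The asymptotic `δ`-basin of attraction `B_δ(q) = ⋃ k, A_δ(Σ^k q)`. -/
def basin {d P Q : ℕ} (φ : ℝ → Es d → Es d) (ξ : Fin P → Es d) (γ : Fin Q → Set (Es d))
    (U : Fin P → Set (Es d)) (V : Fin Q → Set (Es d)) (a b : Fin Q → Fin P)
    (δ : ℝ) (q : ℕ → Fin Q) : Set (Es d) :=
  ⋃ k : ℕ, attrSet φ ξ γ U V a b δ (shiftSeq^[k] q)

/-- The difference set `D_δ^(k)(q) = A_δ(Σ^k q) \ A_δ(Σ^(k-1) q)` (for `k ≥ 1`). -/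
def Dset {d P Q : ℕ} (φ : ℝ → Es d → Es d) (ξ : Fin P → Es d) (γ : Fin Q → Set (Es d))
    (U : Fin P → Set (Es d)) (V : Fin Q → Set (Es d)) (a b : Fin Q → Fin P)
    (δ : ℝ) (q : ℕ → Fin Q) (k : ℕ) : Set (Es d) :=
  attrSet φ ξ γ U V a b δ (shiftSeq^[k] q) \
    attrSet φ ξ γ U V a b δ (shiftSeq^[k - 1] q)

/-- Fragmentary asymptotic stability of a sequence: `μ(B_δ(q)) > 0` for every `δ > 0`. -/
def FAS {d P Q : ℕ} (φ : ℝ → Es d → Es d) (ξ : Fin P → Es d) (γ : Fin Q → Set (Es d))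
    (U : Fin P → Set (Es d)) (V : Fin Q → Set (Es d)) (a b : Fin Q → Fin P)
    (q : ℕ → Fin Q) : Prop :=
  ∀ δ : ℝ, 0 < δ → 0 < volume (basin φ ξ γ U V a b δ q)

theorem shiftSeq_iterate_apply {A : Type*} (q : ℕ → A) (k n : ℕ) :
    shiftSeq^[k] q n = q (n + k) := by
  induction k generalizing n with
  | zero => rfl
  | succ k ih =>
    rw [Function.iterate_succ_apply', shiftSeq, ih]
    congr 1
    omega

theorem PreperiodicSeq.of_shiftSeq_iterate {A : Type*} {q : ℕ → A} {k : ℕ}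
    (h : PreperiodicSeq (shiftSeq^[k] q)) : PreperiodicSeq q := by
  obtain ⟨K, hK, K₀, hper⟩ := h
  refine ⟨K, hK, K₀ + k, fun n hn => ?_⟩
  have hn' := hper (n - k) (by omega)
  rw [shiftSeq_iterate_apply, shiftSeq_iterate_apply] at hn'
  convert hn' using 2 <;> omega

theorem preperiodicSeq_of_shiftSeq_iterate_eq {A : Type*} {q : ℕ → A} {i j : ℕ} (hij : i < j)
    (h : shiftSeq^[i] q = shiftSeq^[j] q) : PreperiodicSeq q := by
  refine ⟨j - i, by omega, i, fun n hn => ?_⟩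
  have hn' := congrFun h (n - i)
  rw [shiftSeq_iterate_apply, shiftSeq_iterate_apply] at hn'
  convert hn'.symm using 2 <;> omega

theorem shiftSeq_iterate_injective {A : Type*} {q : ℕ → A} (hq : ¬ PreperiodicSeq q) :
    Function.Injective (fun k : ℕ => shiftSeq^[k] q) := by
  intro i j h
  rcases lt_trichotomy i j with hij | hij | hij
  · exact absurd (preperiodicSeq_of_shiftSeq_iterate_eq hij h) hq
  · exact hij
  · exact absurd (preperiodicSeq_of_shiftSeq_iterate_eq hij h.symm) hq

theorem FollowsSeq.shiftSeq {d P Q : ℕ} {φ : ℝ → Es d → Es d}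
    {U : Fin P → Set (Es d)} {V : Fin Q → Set (Es d)} {a b : Fin Q → Fin P}
    {UN : Set (Es d)} {q : ℕ → Fin Q} {x : Es d} (h : FollowsSeq φ U V a b UN q x) :
    FollowsSeq φ U V a b UN (shiftSeq q) x := by
  obtain ⟨t, t', h0, htt', ht't, hUN, hU, hV, havoid⟩ := h
  have h01 : t 0 < t 1 := (htt' 0).trans (ht't 0)
  exact ⟨fun k => t (k + 1), fun k => t' (k + 1), h0.trans h01.le, fun k => htt' (k + 1),
    fun k => ht't (k + 1), fun s hs => hUN s (h01.trans hs), fun k => hU (k + 1),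
    fun k => hV (k + 1), fun k => havoid (k + 1)⟩

section Basin

variable {d P Q : ℕ} (φ : ℝ → Es d → Es d) (ξ : Fin P → Es d) (γ : Fin Q → Set (Es d))
  (U : Fin P → Set (Es d)) (V : Fin Q → Set (Es d)) (a b : Fin Q → Fin P)

theorem attrSet_subset_attrSet_shiftSeq_iterate (δ : ℝ) (q : ℕ → Fin Q) (k : ℕ) :
    attrSet φ ξ γ U V a b δ q ⊆ attrSet φ ξ γ U V a b δ (shiftSeq^[k] q) := by
  induction k with
  | zero => exact Subset.rfl
  | succ k ih =>
    rw [Function.iterate_succ_apply']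
    exact ih.trans fun x hx => ⟨⟨hx.1.1, hx.1.2.shiftSeq⟩, hx.2⟩

theorem basin_subset_basin_shiftSeq_iterate (δ : ℝ) (q : ℕ → Fin Q) (k : ℕ) :
    basin φ ξ γ U V a b δ q ⊆ basin φ ξ γ U V a b δ (shiftSeq^[k] q) := by
  refine iUnion_mono fun j => ?_
  rw [← Function.iterate_add_apply, Nat.add_comm, Function.iterate_add_apply]
  exact attrSet_subset_attrSet_shiftSeq_iterate φ ξ γ U V a b δ _ k

variable {φ ξ γ U V a b}

theorem FAS.shiftSeq_iterate {q : ℕ → Fin Q} (h : FAS φ ξ γ U V a b q) (k : ℕ) :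
    FAS φ ξ γ U V a b (shiftSeq^[k] q) := fun δ hδ =>
  (h δ hδ).trans_le (measure_mono (basin_subset_basin_shiftSeq_iterate φ ξ γ U V a b δ q k))

end Basin

/-- Proposition 4.1: if `q` is aperiodic and f.a.s., then its shifts are pairwise distinct, aperiodic and f.a.s.; in particular there are infinitely many distinct aperiodic f.a.s. sequences on the network. -/
theorem countably_many_aperiodic_fas
    {d P Q : ℕ} (hd : 1 ≤ d) (hP : 1 ≤ P) (hQ : 1 ≤ Q)
    (φ : ℝ → Es d → Es d)
    (hφcont : Continuous fun pr : ℝ × Es d => φ pr.1 pr.2)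
    (hφ0 : ∀ x, φ 0 x = x)
    (hφadd : ∀ s t x, φ (s + t) x = φ s (φ t x))
    (ξ : Fin P → Es d) (hξinj : Function.Injective ξ)
    (hfix : ∀ t p, φ t (ξ p) = ξ p)
    (γ : Fin Q → Set (Es d)) (hγne : ∀ j, (γ j).Nonempty)
    (hγinv : ∀ j t x, x ∈ γ j → φ t x ∈ γ j)
    (a b : Fin Q → Fin P)
    (hω : ∀ j, ∀ x ∈ γ j, Tendsto (fun t => φ t x) atTop (𝓝 (ξ (b j))))
    (hα : ∀ j, ∀ x ∈ γ j, Tendsto (fun t => φ t x) atBot (𝓝 (ξ (a j))))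
    (ζ : Fin Q → Es d) (hζ : ∀ j, ζ j ∈ γ j)
    (U : Fin P → Set (Es d)) (hUopen : ∀ p, IsOpen (U p)) (hUmem : ∀ p, ξ p ∈ U p)
    (V : Fin Q → Set (Es d)) (hVopen : ∀ j, IsOpen (V j)) (hVmem : ∀ j, ζ j ∈ V j)
    (hUU : ∀ p p', p ≠ p' → Disjoint (closure (U p)) (closure (U p')))
    (hVV : ∀ j j', j ≠ j' → Disjoint (closure (V j)) (closure (V j')))
    (hUV : ∀ p j, Disjoint (closure (U p)) (closure (V j)))
    (q : ℕ → Fin Q) (hq : ∀ k, b (q k) = a (q (k + 1)))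
    (haper : ¬ PreperiodicSeq q) (hfas : FAS φ ξ γ U V a b q) :
    Function.Injective (fun k : ℕ => shiftSeq^[k] q) ∧
    (∀ k : ℕ, ¬ PreperiodicSeq (shiftSeq^[k] q)) ∧
    (∀ k : ℕ, FAS φ ξ γ U V a b (shiftSeq^[k] q)) ∧
    {q' : ℕ → Fin Q | (∀ k, b (q' k) = a (q' (k + 1))) ∧
      ¬ PreperiodicSeq q' ∧ FAS φ ξ γ U V a b q'}.Infinite := by
  have hinj := shiftSeq_iterate_injective haper
  have hshift : ∀ k, ¬ PreperiodicSeq (shiftSeq^[k] q) := fun k h =>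
    haper h.of_shiftSeq_iterate
  refine ⟨hinj, hshift, hfas.shiftSeq_iterate, infinite_of_injective_forall_mem hinj fun k =>
    ⟨fun n => ?_, hshift k, hfas.shiftSeq_iterate k⟩⟩
  rw [shiftSeq_iterate_apply, shiftSeq_iterate_apply, hq, Nat.add_right_comm]
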